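/- arXiv:2106.11941 — 3 statements merged into one kernel-verified Lean document; each statement's English description precedes it below -/
import Mathlib

section
/- Let D ∈ ℝ^{n×m} have orthonormal columns, i.e. DᵀD = I_m, let Γ ∈ ℝ^{m×m} be a diagonal matrix with strictly positive diagonal entries, and set B_γ = D(I_m + Γ⁻¹)⁻¹Dᵀ. Then (I_n − B_γ)ᵀ(I_n − B_γ) + B_γᵀ D Γ⁻¹ Dᵀ B_γ = (I_n + DΓDᵀ)⁻¹. -/
/-!
Put `E = (I + Γ⁻¹)⁻¹ = diag (ω / (1 + ω))`, so that `B = D E Dᵀ`. Because `DᵀD = I`, the map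
`X ↦ D X Dᵀ` is multiplicative, and the identity becomes one about diagonal matrices.
Since `E² + E Γ⁻¹ E = E`, the left-hand side collapses to `I - D E Dᵀ`, and since
`E + E Γ = Γ`, this is the inverse of `I + D Γ Dᵀ`.
-/

open Matrix

/-- `X ↦ D X Dᵀ` is multiplicative when `D` has orthonormal columns. -/
theorem conj_mul_conj {n m : ℕ} {D : Matrix (Fin n) (Fin m) ℝ} (hD : Dᵀ * D = 1)
    (X Y : Matrix (Fin m) (Fin m) ℝ) :
    (D * X * Dᵀ) * (D * Y * Dᵀ) = D * (X * Y) * Dᵀ := by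
  calc (D * X * Dᵀ) * (D * Y * Dᵀ) = D * X * (Dᵀ * D) * Y * Dᵀ := by
        simp only [Matrix.mul_assoc]
    _ = D * (X * Y) * Dᵀ := by rw [hD, Matrix.mul_one, Matrix.mul_assoc D X Y]

/-- **The profiled residual quadratic form is a WLS criterion.**
Let `D ∈ ℝ^{n×m}` have orthonormal columns (`DᵀD = I_m`), let `Γ = diag(ω)` with `ω_i > 0`,
and set `B_γ = D(I_m + Γ⁻¹)⁻¹Dᵀ`. Then
`(I_n − B_γ)ᵀ(I_n − B_γ) + B_γᵀ D Γ⁻¹ Dᵀ B_γ = (I_n + DΓDᵀ)⁻¹`. -/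
theorem blup_weight_matrix_identity
    (n m : ℕ) (D : Matrix (Fin n) (Fin m) ℝ)
    (hD : Dᵀ * D = (1 : Matrix (Fin m) (Fin m) ℝ))
    (ω : Fin m → ℝ) (hω : ∀ i, 0 < ω i)
    (Γ : Matrix (Fin m) (Fin m) ℝ) (hΓ : Γ = Matrix.diagonal ω)
    (B : Matrix (Fin n) (Fin n) ℝ)
    (hB : B = D * ((1 : Matrix (Fin m) (Fin m) ℝ) + Γ⁻¹)⁻¹ * Dᵀ) :
    ((1 : Matrix (Fin n) (Fin n) ℝ) - B)ᵀ * ((1 : Matrix (Fin n) (Fin n) ℝ) - B)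
        + Bᵀ * D * Γ⁻¹ * Dᵀ * B
      = ((1 : Matrix (Fin n) (Fin n) ℝ) + D * Γ * Dᵀ)⁻¹ := by
  have hω0 : ∀ i, ω i ≠ 0 := fun i => (hω i).ne'
  have hω1 : ∀ i, 1 + ω i ≠ 0 := fun i => by have := hω i; positivity
  have hΓinv : Γ⁻¹ = diagonal fun i => (ω i)⁻¹ := by
    apply Matrix.inv_eq_right_inv
    rw [hΓ, diagonal_mul_diagonal, ← diagonal_one]
    exact congrArg diagonal (funext fun i => mul_inv_cancel₀ (hω0 i))
  obtain ⟨E, hE⟩ : ∃ E : Matrix (Fin m) (Fin m) ℝ, E = diagonal fun i => ω i / (1 + ω i) :=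
    ⟨_, rfl⟩
  have hEinv : (1 + Γ⁻¹)⁻¹ = E := by
    apply Matrix.inv_eq_right_inv
    rw [hΓinv, hE, ← diagonal_one, diagonal_add, diagonal_mul_diagonal]
    congr 1
    funext i
    have h0 := hω0 i
    have h1 := hω1 i
    field_simp
    ring
  have hET : Eᵀ = E := by rw [hE, diagonal_transpose]
  have hquad : E * E + E * Γ⁻¹ * E = E := by
    rw [hΓinv, hE]
    simp only [diagonal_mul_diagonal, diagonal_add]
    congr 1
    funext i
    have h0 := hω0 i
    have h1 := hω1 i
    field_simp
    ring
  have hEΓ : E + E * Γ = Γ := by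
    rw [hΓ, hE]
    simp only [diagonal_mul_diagonal, diagonal_add]
    congr 1
    funext i
    have h1 := hω1 i
    field_simp
  rw [hEinv] at hB
  have hBT : Bᵀ = B := by
    rw [hB, transpose_mul, transpose_mul, transpose_transpose, hET, Matrix.mul_assoc]
  have hBB : B * B = D * (E * E) * Dᵀ := by rw [hB, conj_mul_conj hD]
  have hBΓB : B * D * Γ⁻¹ * Dᵀ * B = D * (E * Γ⁻¹ * E) * Dᵀ := by
    rw [← conj_mul_conj hD, ← conj_mul_conj hD, hB]
    simp only [Matrix.mul_assoc]
  have hsum : B * B + B * D * Γ⁻¹ * Dᵀ * B = B := by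
    rw [hBB, hBΓB, ← Matrix.add_mul, ← Matrix.mul_add, hquad, hB]
  have hlhs : (1 - B)ᵀ * (1 - B) + Bᵀ * D * Γ⁻¹ * Dᵀ * B = 1 - B := by
    rw [transpose_sub, transpose_one, hBT]
    calc (1 - B) * (1 - B) + B * D * Γ⁻¹ * Dᵀ * B
        = 1 - B - B + (B * B + B * D * Γ⁻¹ * Dᵀ * B) := by noncomm_ring
      _ = 1 - B := by rw [hsum, sub_add_cancel]
  have hres : B + B * (D * Γ * Dᵀ) = D * Γ * Dᵀ := by
    rw [hB, conj_mul_conj hD, ← Matrix.add_mul, ← Matrix.mul_add, hEΓ]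
  rw [hlhs]
  symm
  apply Matrix.inv_eq_left_inv
  calc (1 - B) * (1 + D * Γ * Dᵀ)
      = 1 + D * Γ * Dᵀ - (B + B * (D * Γ * Dᵀ)) := by
        rw [Matrix.sub_mul, Matrix.one_mul, Matrix.mul_add, Matrix.mul_one]
    _ = 1 := by rw [hres, add_sub_cancel_right]
end

section
/- Let X ∈ ℝ^{n×p} with XᵀX invertible, y ∈ ℝ^n, fix an index i ∈ {1,…,n} and a weight w ∈ (0,1]. Let W ∈ ℝ^{n×n} be the diagonal matrix with W_{ii} = w and all other diagonal entries equal to 1. Let β̃ = (XᵀX)⁻¹Xᵀy be the ordinary least-squares estimator, ẽ_i = y_i − x_iᵀβ̃ the i-th OLS residual, and H_{x,ii} = x_iᵀ(XᵀX)⁻¹x_i the i-th diagonal entry of the hat matrix. Then XᵀWX is invertible, 1 − (1 − w)H_{x,ii} ≠ 0, and the weighted least-squares estimator satisfies (XᵀWX)⁻¹XᵀWy = β̃ − (XᵀX)⁻¹ x_i ẽ_i · (1 − w) / (1 − (1 − w)H_{x,ii}). -/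
/-!
Put `c = 1 - w`, `A = XᵀX`, `x = X i` and `u = A⁻¹x`. Down-weighting case `i` is the rank-one
perturbation `XᵀWz = Xᵀz - c zᵢ x` (`transpose_mul_weight_mulVec`). The leverage satisfies
`H = uᵀAu = ‖Xu‖² ≥ (Xu)ᵢ² = H²`, so `H ≤ 1` (`leverage_le_one`) and
`1 - cH ≥ w > 0`. If `XᵀWXv = 0` then `v = c(x·v)u`, so `(x·v)(1 - cH) = 0` and `v = 0`: hence
`XᵀWX` is invertible, and it remains to check that the claimed vector solves the weighted normal
equations, by linearity.
-/

open Matrix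

theorem transpose_mul_weight_mulVec {n p : ℕ} (X : Matrix (Fin n) (Fin p) ℝ) (i : Fin n) (w : ℝ)
    (z : Fin n → ℝ) :
    (Xᵀ * Matrix.diagonal (fun j => if j = i then w else 1)) *ᵥ z
      = Xᵀ *ᵥ z - ((1 - w) * z i) • X i := by
  have h : Matrix.diagonal (fun j => if j = i then w else 1) *ᵥ z
      = z - Pi.single i ((1 - w) * z i) := by
    ext j
    by_cases hj : j = i
    · subst hj
      simp [mulVec_diagonal]
      ring
    · simp [mulVec_diagonal, hj]
  rw [← mulVec_mulVec, h, mulVec_sub]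
  congr 1
  ext k
  simp [mul_comm]

theorem leverage_le_one {n p : ℕ} (X : Matrix (Fin n) (Fin p) ℝ) (i : Fin n) (u : Fin p → ℝ)
    (hu : (Xᵀ * X) *ᵥ u = X i) : X i ⬝ᵥ u ≤ 1 := by
  have h1 : X i ⬝ᵥ u = ∑ j, (X *ᵥ u) j * (X *ᵥ u) j := by
    calc X i ⬝ᵥ u = (Xᵀ *ᵥ (X *ᵥ u)) ⬝ᵥ u := by rw [mulVec_mulVec, hu]
      _ = (X *ᵥ u) ⬝ᵥ (X *ᵥ u) := by rw [mulVec_transpose, ← dotProduct_mulVec]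
      _ = _ := rfl
  have h2 : (X *ᵥ u) i * (X *ᵥ u) i ≤ ∑ j, (X *ᵥ u) j * (X *ᵥ u) j :=
    Finset.single_le_sum (f := fun j => (X *ᵥ u) j * (X *ᵥ u) j)
      (fun j _ => mul_self_nonneg _) (Finset.mem_univ i)
  rw [← h1] at h2
  change (X i ⬝ᵥ u) * (X i ⬝ᵥ u) ≤ X i ⬝ᵥ u at h2
  nlinarith

/-- **Closed form of the down-weighted (variance-inflation) WLS estimator.**
Let `X ∈ ℝ^{n×p}` with `XᵀX` invertible, `y ∈ ℝ^n`, fix a case `i` and a weight `w ∈ (0,1]`,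
and let `W` be diagonal with `W_{ii} = w` and all other diagonal entries `1`. With
`β̃ = (XᵀX)⁻¹Xᵀy`, `ẽ_i = y_i − x_iᵀβ̃` and `H_{x,ii} = x_iᵀ(XᵀX)⁻¹x_i`, the matrix `XᵀWX`
is invertible, `1 − (1 − w)H_{x,ii} ≠ 0`, and
`(XᵀWX)⁻¹XᵀWy = β̃ − (XᵀX)⁻¹ x_i ẽ_i (1 − w)/(1 − (1 − w)H_{x,ii})`. -/
theorem viom_wls_downweighting
    (n p : ℕ) (X : Matrix (Fin n) (Fin p) ℝ) (y : Fin n → ℝ)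
    (hX : IsUnit (Xᵀ * X)) (i : Fin n)
    (w : ℝ) (hw : w ∈ Set.Ioc (0 : ℝ) 1)
    (W : Matrix (Fin n) (Fin n) ℝ)
    (hW : W = Matrix.diagonal (fun j => if j = i then w else 1))
    (βt : Fin p → ℝ) (hβt : βt = (Xᵀ * X)⁻¹.mulVec (Xᵀ.mulVec y))
    (e : ℝ) (he : e = y i - X i ⬝ᵥ βt)
    (H : ℝ) (hH : H = X i ⬝ᵥ (Xᵀ * X)⁻¹.mulVec (X i)) :
    IsUnit (Xᵀ * W * X) ∧
    1 - (1 - w) * H ≠ 0 ∧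
    (Xᵀ * W * X)⁻¹.mulVec ((Xᵀ * W).mulVec y)
      = βt - ((1 - w) * e / (1 - (1 - w) * H)) • (Xᵀ * X)⁻¹.mulVec (X i) := by
  have hdet : IsUnit (Xᵀ * X).det := (isUnit_iff_isUnit_det _).1 hX
  set u := (Xᵀ * X)⁻¹ *ᵥ X i with hu
  have hAu : (Xᵀ * X) *ᵥ u = X i := by
    rw [hu, mulVec_mulVec, mul_nonsing_inv _ hdet, one_mulVec]
  have hAβ : (Xᵀ * X) *ᵥ βt = Xᵀ *ᵥ y := by
    rw [hβt, mulVec_mulVec, mul_nonsing_inv _ hdet, one_mulVec]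
  have hH1 : H ≤ 1 := hH ▸ leverage_le_one X i u hAu
  have hD : 1 - (1 - w) * H ≠ 0 := by
    have : 0 < 1 - (1 - w) * H := by nlinarith [hw.1, hw.2]
    exact this.ne'
  have hB : ∀ v, (Xᵀ * W * X) *ᵥ v = (Xᵀ * X) *ᵥ v - ((1 - w) * (X i ⬝ᵥ v)) • X i := by
    intro v
    rw [← mulVec_mulVec, hW, transpose_mul_weight_mulVec, mulVec_mulVec]
    rfl
  have hunit : IsUnit (Xᵀ * W * X) := by
    rw [← mulVec_injective_iff_isUnit]
    refine (injective_iff_map_eq_zero (Xᵀ * W * X).mulVecLin).2 fun v hv => ?_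
    rw [mulVecLin_apply, hB, sub_eq_zero] at hv
    have hv' : v = ((1 - w) * (X i ⬝ᵥ v)) • u := by
      have := congrArg ((Xᵀ * X)⁻¹ *ᵥ ·) hv
      simpa only [mulVec_mulVec, nonsing_inv_mul _ hdet, one_mulVec, mulVec_smul] using this
    have h0 : (X i ⬝ᵥ v) * (1 - (1 - w) * H) = 0 := by
      have := congrArg (X i ⬝ᵥ ·) hv'
      simp only [dotProduct_smul, smul_eq_mul, ← hH] at this
      linarith
    rw [hv', (mul_eq_zero.1 h0).resolve_right hD, mul_zero, zero_smul]
  refine ⟨hunit, hD, ?_⟩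
  have hdetB : IsUnit (Xᵀ * W * X).det := (isUnit_iff_isUnit_det _).1 hunit
  set s := (1 - w) * e / (1 - (1 - w) * H) with hs
  have hs' : s * (1 - (1 - w) * H) = (1 - w) * e := div_mul_cancel₀ _ hD
  have hsol : (Xᵀ * W) *ᵥ y = (Xᵀ * W * X) *ᵥ (βt - s • u) := by
    rw [hB, hW, transpose_mul_weight_mulVec, mulVec_sub, mulVec_smul, hAu, hAβ, dotProduct_sub,
      dotProduct_smul, ← hH]
    ext k
    simp only [Pi.sub_apply, Pi.smul_apply, smul_eq_mul]
    rw [he] at hs'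
    linear_combination X i k * hs'
  rw [hsol, mulVec_mulVec, nonsing_inv_mul _ hdetB, one_mulVec]
end

section
/- Let X ∈ ℝ^{n×p} with XᵀX invertible, y ∈ ℝ^n, fix i ∈ {1,…,n} with H_{x,ii} = x_iᵀ(XᵀX)⁻¹x_i < 1. For w ∈ (0,1] let β̂(w) = (XᵀW(w)X)⁻¹XᵀW(w)y, where W(w) is diagonal with i-th diagonal entry w and all other diagonal entries 1. Then, as w → 0⁺ (equivalently as the variance-inflation factor v_i = 1/w → ∞), β̂(w) converges to the case-deletion least-squares estimator β̂_{(i)} = (X_{(i)}ᵀX_{(i)})⁻¹X_{(i)}ᵀy_{(i)}, where X_{(i)}, y_{(i)} are obtained by deleting row i. That is, the variance-inflation outlier model is asymptotically equivalent to the mean-shift outlier model as v_i → ∞. -/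
/-!
The weighted normal equations `XᵀW(w)X β = XᵀW(w)y` depend polynomially on `w`, and at `w = 0` they
are exactly the normal equations with case `i` deleted. The limit is therefore continuity of
`w ↦ β̂(w)` at `0`, which only needs the deleted Gram matrix to be invertible. That Gram matrix is
the rank-one downdate `XᵀX - x_i x_iᵀ`, whose determinant is `det (XᵀX) * (1 - H_ii)` by the matrix
determinant lemma, and this is nonzero since `H_ii < 1`.
-/

open Matrix

/-- Giving case `i` weight zero in a sum over cases amounts to deleting it. -/
lemma sum_ite_zero_eq_sum_subtype {n : ℕ} (i : Fin n) (f g : Fin n → ℝ) :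
    ∑ j, f j * (if j = i then 0 else 1) * g j = ∑ j : {j : Fin n // j ≠ i}, f j.1 * g j.1 := by
  rw [Fintype.sum_eq_add_sum_subtype_ne _ i]
  simp only [if_true, mul_zero, zero_mul, zero_add]
  exact Finset.sum_congr rfl fun j _ => by rw [if_neg j.2, mul_one]

/-- By the matrix determinant lemma, `det (G - uuᵀ) = det G * (1 - uᵀG⁻¹u)`. -/
lemma isUnit_sub_vecMulVec {p : ℕ} {G : Matrix (Fin p) (Fin p) ℝ} (hG : IsUnit G)
    (u : Fin p → ℝ) (hu : u ⬝ᵥ G⁻¹.mulVec u < 1) : IsUnit (G - vecMulVec u u) := by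
  have hdet := (Matrix.isUnit_iff_isUnit_det _).1 hG
  rw [Matrix.isUnit_iff_isUnit_det, sub_eq_add_neg, ← Matrix.neg_vecMulVec,
    Matrix.vecMulVec_eq Unit, Matrix.det_add_replicateCol_mul_replicateRow hdet]
  refine hdet.mul (isUnit_iff_ne_zero.2 ?_)
  rw [Matrix.det_unique]
  have : (1 + replicateRow Unit u * G⁻¹ * replicateCol Unit (-u) : Matrix Unit Unit ℝ)
        default default
      = 1 - u ⬝ᵥ G⁻¹.mulVec u := by
    rw [Matrix.mul_assoc, ← Matrix.replicateCol_mulVec, Matrix.mulVec_neg]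
    simp [Matrix.mul_apply, dotProduct, sub_eq_add_neg]
  rw [this]
  linarith

/-- **The VIOM is asymptotically equivalent to the MSOM as the variance inflation diverges.**
Let `X ∈ ℝ^{n×p}` with `XᵀX` invertible, `y ∈ ℝ^n`, and fix a case `i` with
`H_{x,ii} = x_iᵀ(XᵀX)⁻¹x_i < 1`. For `w ∈ (0,1]` let
`β̂(w) = (XᵀW(w)X)⁻¹XᵀW(w)y`, where `W(w)` is diagonal with `i`-th diagonal entry `w` and
all other diagonal entries `1`. Then, as `w → 0⁺` (equivalently `v_i = 1/w → ∞`), `β̂(w)`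
converges to the case-deletion least-squares estimator
`β̂_{(i)} = (X_{(i)}ᵀX_{(i)})⁻¹X_{(i)}ᵀy_{(i)}`. -/
theorem viom_tendsto_msom
    (n p : ℕ) (X : Matrix (Fin n) (Fin p) ℝ) (y : Fin n → ℝ)
    (hX : IsUnit (Xᵀ * X)) (i : Fin n)
    (hH : X i ⬝ᵥ (Xᵀ * X)⁻¹.mulVec (X i) < 1)
    (Xd : Matrix {j : Fin n // j ≠ i} (Fin p) ℝ) (hXd : ∀ j k, Xd j k = X j.1 k)
    (yd : {j : Fin n // j ≠ i} → ℝ) (hyd : ∀ j, yd j = y j.1) :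
    Filter.Tendsto
      (fun w : ℝ =>
        ((Xᵀ * Matrix.diagonal (fun j => if j = i then w else 1) * X)⁻¹).mulVec
          ((Xᵀ * Matrix.diagonal (fun j => if j = i then w else 1)).mulVec y))
      (nhdsWithin 0 (Set.Ioi 0))
      (nhds ((Xdᵀ * Xd)⁻¹.mulVec (Xdᵀ.mulVec yd))) := by
  have hgram : Xᵀ * diagonal (fun j => if j = i then (0 : ℝ) else 1) * X = Xdᵀ * Xd := by
    ext a b
    rw [mul_apply, mul_apply]
    simp only [mul_diagonal, transpose_apply, hXd]
    exact sum_ite_zero_eq_sum_subtype i (fun j => X j a) (fun j => X j b)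
  have hrhs : (Xᵀ * diagonal (fun j => if j = i then (0 : ℝ) else 1)).mulVec y
      = Xdᵀ.mulVec yd := by
    ext a
    simp only [mulVec, dotProduct, mul_diagonal, transpose_apply, hXd, hyd]
    exact sum_ite_zero_eq_sum_subtype i (fun j => X j a) y
  have hdown : Xdᵀ * Xd = Xᵀ * X - vecMulVec (X i) (X i) := by
    ext a b
    rw [Matrix.sub_apply, mul_apply, mul_apply, vecMulVec_apply]
    simp only [transpose_apply, hXd]
    rw [Fintype.sum_eq_add_sum_subtype_ne (fun j => X j a * X j b) i]
    ring
  have hunit : IsUnit (Xdᵀ * Xd).det := by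
    rw [hdown, ← isUnit_iff_isUnit_det]
    exact isUnit_sub_vecMulVec hX (X i) hH
  have hW : Continuous fun w : ℝ => diagonal fun j : Fin n => if j = i then w else 1 :=
    Continuous.matrix_diagonal (continuous_pi fun j => by split_ifs <;> fun_prop)
  have hA : Continuous fun w : ℝ => Xᵀ * diagonal (fun j => if j = i then w else 1) * X :=
    (continuous_const.matrix_mul hW).matrix_mul continuous_const
  have hb : Continuous fun w : ℝ =>
      (Xᵀ * diagonal (fun j => if j = i then w else 1)).mulVec y :=
    (continuous_const.matrix_mul hW).matrix_mulVec continuous_const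
  have hinv : ContinuousAt
      (fun w : ℝ => (Xᵀ * diagonal (fun j => if j = i then w else 1) * X)⁻¹) 0 := by
    simp only [Matrix.inv_def, Ring.inverse_eq_inv']
    refine (hA.matrix_det.continuousAt.inv₀ ?_).smul hA.matrix_adjugate.continuousAt
    rw [hgram]
    exact hunit.ne_zero
  -- Matrix-vector multiplication is jointly continuous, so it preserves the two limits.
  have hmul : Continuous fun q : Matrix (Fin p) (Fin p) ℝ × (Fin p → ℝ) => q.1.mulVec q.2 :=
    continuous_fst.matrix_mulVec continuous_snd
  have hlim := (hmul.continuousAt.tendsto.comp (hinv.tendsto.prodMk_nhds hb.continuousAt.tendsto))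
  rw [hgram, hrhs] at hlim
  exact hlim.mono_left nhdsWithin_le_nhds
end
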